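/- arXiv:1409.4379 — 3 statements merged into one kernel-verified Lean document; each statement's English description precedes it below -/
import Mathlib

section
/- Let N ≥ 3 and d ≥ 1 be integers. Suppose the regular N-gon admits a Hermitian psd lift of size d that is equivariant with respect to the rotation group Rot_N ≅ ℤ/Nℤ; i.e., suppose there exist: an ℝ-affine subspace L of the d×d complex matrices all of whose elements are Hermitian; an ℝ-linear map π from d×d complex Hermitian matrices to ℝ²; and a map ρ : ℤ/Nℤ → GL_d(ℂ) with ρ(g + g') = ρ(g)ρ(g') for all g, g'; such that: (1) conv(𝒳_N) = π({Y ∈ L : Y positive semidefinite}); (2) ρ(g) Y ρ(g)* ∈ L for all g ∈ ℤ/Nℤ and all Y ∈ L; and (3) π(ρ(g) Y ρ(g)*) = R_g · π(Y) for all g ∈ ℤ/Nℤ and all positive semidefinite Y ∈ L, where R_g is the rotation of ℝ² by angle 2πg/N and ρ(g)* is the conjugate transpose. Then there exists a set K ⊆ ℤ/Nℤ with |K| ≤ d that is sos-valid. -/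
/-!
Let `ρ` be the representation of `ℤ/Nℤ` and let `K` be the set of frequencies occurring in it,
i.e. the `k` for which the Fourier coefficient of the matrix-valued function `ρ` is nonzero. A
nonzero column of the `k`-th coefficient is an eigenvector of `ρ 1` with eigenvalue
`exp(2πik/N)`, so `|K| ≤ d`, and by Fourier inversion every matrix coefficient of `ρ` is supported
on `K` (`exists_frequencies_of_representation`).

The sums of squares of functions supported on `K` form a cone with compact base, so by Hahn-Banach
the facet function `l` is such a sum as soon as `∑ c_j l_j ≥ 0` for every real `c` with
`∑ c_j |h_j|² ≥ 0` for all `h` supported on `K` (`exists_sos_of_dual_nonneg`). To verify this, take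
a psd `Y₀ ∈ L` over the vertex of angle `π/N` and put `Y_j = ρ(j) Y₀ ρ(j)*`, which lies over the
`j`-th vertex. Writing `Y₀` as a sum of rank-one matrices `v v*`, the quadratic form of
`∑ c_j Y_j` at `x` is a sum of terms `∑ c_j |x* ρ(j) v|²`, so `∑ c_j Y_j` is psd
(`posSemidef_sum_smul_conj`). As `l` vanishes at the vertex `0`, a multiple of `Y_0` may be added
to make the sum of the coefficients positive, without changing `∑ c_j l_j`; after rescaling, the
matrix is a psd element of `L`, hence projects into the polygon, where the facet inequality holds.
-/
open Real Finset

/-- The cyclic distance on `ℤ/Nℤ`: `d(a,b) = min{|m| : m ∈ ℤ, m ≡ a − b (mod N)}`. -/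
def cycDist (N : ℕ) (a b : ZMod N) : ℕ := min (a - b).val (b - a).val

/-- `C ⊆ ℤ/Nℤ` has in-diameter at most `γ` if it is contained in an interval
`{x, x+1, …, x+γ}`. -/
def HasInDiamLE (N γ : ℕ) (C : Finset (ZMod N)) : Prop :=
  ∃ x : ZMod N, ∀ c ∈ C, ∃ t : ℕ, t ≤ γ ∧ c = x + (t : ZMod N)

/-- The pure frequency `e_k : ℤ/Nℤ → ℂ`, `e_k(j) = exp(2πi·kj/N)`. -/
noncomputable def freq (N : ℕ) (k j : ZMod N) : ℂ :=
  Complex.exp (2 * Real.pi * Complex.I * (k.val : ℂ) * (j.val : ℂ) / N)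

/-- `h : ℤ/Nℤ → ℂ` is supported on `K` if it is a `ℂ`-linear combination of the
pure frequencies `e_k`, `k ∈ K`. -/
def SupportedOn (N : ℕ) (K : Finset (ZMod N)) (h : ZMod N → ℂ) : Prop :=
  ∃ c : ZMod N → ℂ, h = fun j => ∑ k ∈ K, c k * freq N k j

/-- `K ⊆ ℤ/Nℤ` is sos-valid if the facet function `cos(π/N) − cos((2j+1)π/N)` of the
regular `N`-gon is a finite sum of squared moduli of functions supported on `K`. -/
def SosValid (N : ℕ) (K : Finset (ZMod N)) : Prop :=
  ∃ (m : ℕ) (h : Fin m → ZMod N → ℂ), (∀ i, SupportedOn N K (h i)) ∧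
    ∀ j : ZMod N,
      Real.cos (π / N) - Real.cos ((2 * (j.val : ℝ) + 1) * π / N) =
        ∑ i, Complex.normSq (h i j)

open Matrix
open scoped ComplexOrder


theorem freq_eq_stdAddChar (N : ℕ) [NeZero N] (k j : ZMod N) :
    freq N k j = ZMod.stdAddChar (k * j) := by
  have h : k * j = (((k.val * j.val : ℕ) : ℤ) : ZMod N) := by simp
  rw [h, ZMod.stdAddChar_coe, freq]
  push_cast
  ring_nf

/-- The matrix coefficients of a `d`-dimensional representation of `ℤ/Nℤ` involve at most `d`
frequencies. The relation `ρ 0 = 1` is not required. -/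
theorem exists_frequencies_of_representation (N d : ℕ) [NeZero N]
    (ρ : ZMod N → Matrix (Fin d) (Fin d) ℂ) (hρ : ∀ g g', ρ (g + g') = ρ g * ρ g') :
    ∃ K : Finset (ZMod N), K.card ≤ d ∧
      ∀ φ : Matrix (Fin d) (Fin d) ℂ →ₗ[ℂ] ℂ, SupportedOn N K fun j => φ (ρ j) := by
  classical
  set P := ZMod.dft ρ with hP
  -- Up to the factor `N`, `P k` projects onto the `k`-isotypic component.
  have heig (k : ZMod N) : ρ 1 * P k = ZMod.stdAddChar k • P k := by
    rw [hP, ZMod.dft_apply, Finset.mul_sum, Finset.smul_sum]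
    refine Fintype.sum_equiv (Equiv.addLeft (1 : ZMod N)) _ _ fun j => ?_
    rw [Matrix.mul_smul, ← hρ, smul_smul, ← AddChar.map_add_eq_mul, Equiv.coe_addLeft]
    congr 2
    ring
  refine ⟨Finset.univ.filter fun k => P k ≠ 0, ?_, fun φ => ?_⟩
  · have hcol (k : {k // P k ≠ 0}) : ∃ i, (P k).col i ≠ 0 := by
      by_contra! h
      exact k.2 (Matrix.ext fun a b => congrFun (h b) a)
    choose i hi using hcol
    have hlin := Module.End.eigenvectors_linearIndependent' (Matrix.toLin' (ρ 1))
      (fun k : {k // P k ≠ 0} => ZMod.stdAddChar (k : ZMod N))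
      (ZMod.injective_stdAddChar.comp Subtype.val_injective)
      (fun k => (P k).col (i k)) fun k => by
        refine ⟨Module.End.mem_eigenspace_iff.2 ?_, hi k⟩
        funext a
        exact congrFun (congrFun (heig k) a) (i k)
    have := hlin.fintype_card_le_finrank
    rwa [Module.finrank_fin_fun, Fintype.card_subtype] at this
  · refine ⟨fun k => (N : ℂ)⁻¹ * φ (P k), funext fun j => ?_⟩
    have hinv : ρ j = (N : ℂ)⁻¹ • ∑ k, ZMod.stdAddChar (k * j) • P k := by
      rw [← ZMod.invDFT_apply, hP, LinearEquiv.symm_apply_apply]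
    rw [Finset.sum_filter_of_ne (p := fun k => P k ≠ 0)
      (fun k _ hk h0 => hk (by simp only [h0, map_zero, mul_zero, zero_mul])), hinv, map_smul, map_sum,
      smul_eq_mul, Finset.mul_sum]
    refine Finset.sum_congr rfl fun k _ => ?_
    rw [map_smul, smul_eq_mul, freq_eq_stdAddChar]
    ring

/-- The functions supported on `K`, as a subspace of all functions on `ℤ/Nℤ`. -/
def supportedSubmodule (N : ℕ) (K : Finset (ZMod N)) : Submodule ℂ (ZMod N → ℂ) where
  carrier := {h | SupportedOn N K h}
  zero_mem' := ⟨0, by funext j; simp⟩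
  add_mem' := by
    rintro _ _ ⟨a, rfl⟩ ⟨b, rfl⟩
    exact ⟨a + b, by funext j; simp [add_mul, Finset.sum_add_distrib]⟩
  smul_mem' := by
    rintro r _ ⟨a, rfl⟩
    exact ⟨r • a, by funext j; simp [Finset.mul_sum, mul_assoc]⟩

theorem cos_le_cos_of_mem_Icc {a θ : ℝ} (h0 : 0 ≤ a) (h1 : a ≤ θ) (h2 : θ ≤ 2 * π - a) :
    Real.cos θ ≤ Real.cos a := by
  rcases le_total θ π with h | h
  · exact Real.cos_le_cos_of_nonneg_of_le_pi h0 h h1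
  · rw [← Real.cos_two_pi_sub θ]
    exact Real.cos_le_cos_of_nonneg_of_le_pi h0 (by linarith) (by linarith)

/-- If `c` pairs nonnegatively with the squares `|h|²`, `h ∈ F`, where `F` contains all matrix
coefficients of `ρ`, then the corresponding combination of conjugates of a psd matrix is psd, even
though the `c j` may be negative. -/
theorem posSemidef_sum_smul_conj {ι : Type*} [Fintype ι] {d : ℕ}
    (ρ : ι → Matrix (Fin d) (Fin d) ℂ) (F : Submodule ℂ (ι → ℂ))
    (hF : ∀ φ : Matrix (Fin d) (Fin d) ℂ →ₗ[ℂ] ℂ, (fun j => φ (ρ j)) ∈ F)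
    {Y : Matrix (Fin d) (Fin d) ℂ} (hY : Y.PosSemidef) (c : ι → ℝ)
    (hc : ∀ h ∈ F, 0 ≤ ∑ j, c j * Complex.normSq (h j)) :
    (∑ j, c j • (ρ j * Y * (ρ j)ᴴ)).PosSemidef := by
  refine .of_dotProduct_mulVec_nonneg ?_ fun x => ?_
  · refine isSelfAdjoint_sum _ fun j _ => IsSelfAdjoint.smul (.all _) ?_
    exact (hY.mul_mul_conjTranspose_same (ρ j)).isHermitian
  · obtain ⟨m, v, rfl⟩ := Matrix.posSemidef_iff_eq_sum_vecMulVec.1 hY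
    have key (j : ι) : star x ⬝ᵥ ((ρ j * (∑ i, vecMulVec (v i) (star (v i))) * (ρ j)ᴴ) *ᵥ x) =
        ((∑ i, Complex.normSq (star x ⬝ᵥ (ρ j *ᵥ v i)) : ℝ) : ℂ) := by
      rw [← Matrix.mulVec_mulVec, ← Matrix.mulVec_mulVec, Matrix.sum_mulVec, Matrix.mulVec_sum,
        dotProduct_sum, Complex.ofReal_sum]
      refine Finset.sum_congr rfl fun i _ => ?_
      have hst : star (v i) ⬝ᵥ ((ρ j)ᴴ *ᵥ x) = star (star x ⬝ᵥ (ρ j *ᵥ v i)) := by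
        rw [Matrix.star_dotProduct, Matrix.star_mulVec, Matrix.conjTranspose_conjTranspose,
          ← Matrix.dotProduct_mulVec]
      rw [Matrix.vecMulVec_mulVec, hst, Complex.normSq_eq_conj_mul_self, ← Complex.star_def,
        op_smul_eq_smul, Matrix.mulVec_smul, dotProduct_smul, smul_eq_mul]
    have htot : star x ⬝ᵥ ((∑ j, c j • (ρ j * (∑ i, vecMulVec (v i) (star (v i))) * (ρ j)ᴴ)) *ᵥ x)
        = ((∑ i, ∑ j, c j * Complex.normSq (star x ⬝ᵥ (ρ j *ᵥ v i)) : ℝ) : ℂ) := by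
      rw [Matrix.sum_mulVec, dotProduct_sum, Finset.sum_comm, Complex.ofReal_sum]
      refine Finset.sum_congr rfl fun j _ => ?_
      rw [Matrix.smul_mulVec, dotProduct_smul, key, ← Finset.mul_sum, Complex.real_smul,
        Complex.ofReal_mul]
    rw [htot, Complex.zero_le_real]
    refine Finset.sum_nonneg fun i _ => ?_
    exact hc _ (hF
      { toFun := fun M => star x ⬝ᵥ (M *ᵥ v i)
        map_add' := fun A B => by rw [Matrix.add_mulVec, dotProduct_add]
        map_smul' := fun r A => by rw [Matrix.smul_mulVec, dotProduct_smul]; rfl })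

theorem affineSubspace_sum_smul_mem {ι E : Type*} [Fintype ι] [Nonempty ι] [AddCommGroup E]
    [Module ℝ E] (L : AffineSubspace ℝ E) (w : ι → ℝ) (hw : ∑ i, w i = 1) (y : ι → E)
    (hy : ∀ i, y i ∈ L) : ∑ i, w i • y i ∈ L := by
  rw [← Finset.affineCombination_eq_linear_combination _ _ _ hw]
  exact affineSpan_le.2 (Set.range_subset_iff.2 hy)
    (affineCombination_mem_affineSpan_of_nonempty hw y)

/-- By Carathéodory's theorem the convex hull is a finite union of continuous images of the compact
sets `stdSimplex × s ^ m`, `m ≤ dim E + 1`. -/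
theorem isCompact_convexHull_of_finiteDimensional {E : Type*} [NormedAddCommGroup E]
    [NormedSpace ℝ E] [FiniteDimensional ℝ E] {s : Set E} (hs : IsCompact s) :
    IsCompact (convexHull ℝ s) := by
  have hunion : convexHull ℝ s = ⋃ m ∈ Finset.range (Module.finrank ℝ E + 2),
      (fun p : (Fin m → ℝ) × (Fin m → E) => ∑ i, p.1 i • p.2 i) ''
        (stdSimplex ℝ (Fin m) ×ˢ Set.univ.pi fun _ => s) := by
    apply Set.Subset.antisymm
    · intro x hx
      obtain ⟨ι, _, z, w, hz, hind, hw, hw1, hx⟩ := eq_pos_convex_span_of_mem_convexHull hx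
      have hcard : Fintype.card ι ≤ Module.finrank ℝ E + 1 :=
        hind.card_le_finrank_succ.trans
          (Nat.add_le_add_right (Submodule.finrank_le _) 1)
      let e := Fintype.equivFin ι
      simp only [Set.mem_iUnion]
      refine ⟨Fintype.card ι, Finset.mem_range.2 (by omega), (w ∘ e.symm, z ∘ e.symm),
        ⟨⟨fun i => (hw _).le, ?_⟩, fun i _ => hz (Set.mem_range_self _)⟩, ?_⟩
      · rw [← hw1]; exact e.symm.sum_comp w
      · rw [← hx]; exact e.symm.sum_comp fun i => w i • z i
    · simp only [Set.iUnion_subset_iff]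
      rintro m - _ ⟨p, ⟨hp, hz⟩, rfl⟩
      exact mem_convexHull_of_exists_fintype p.1 p.2 hp.1 hp.2 (fun i => hz i trivial) rfl
  rw [hunion]
  refine (Finset.range _).isCompact_biUnion fun m _ => ?_
  refine ((isCompact_stdSimplex ℝ (Fin m)).prod (isCompact_univ_pi fun _ => hs)).image ?_
  fun_prop

/-- Conic duality for the cone of sums of squared moduli of functions in `F`: no closure is needed,
since the normalized squares form a compact set. -/
theorem exists_sos_of_dual_nonneg {ι : Type*} [Fintype ι] (F : Submodule ℂ (ι → ℂ))
    (l : ι → ℝ) (hpos : 0 < ∑ j, l j)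
    (H : ∀ c : ι → ℝ, (∀ h ∈ F, 0 ≤ ∑ j, c j * Complex.normSq (h j)) → 0 ≤ ∑ j, c j * l j) :
    ∃ (m : ℕ) (h : Fin m → ι → ℂ), (∀ i, h i ∈ F) ∧
      ∀ j, l j = ∑ i, Complex.normSq (h i j) := by
  classical
  set q : (ι → ℂ) → ι → ℝ := fun h j => Complex.normSq (h j) with hq
  have hqc : Continuous q := by
    refine continuous_pi fun j => Complex.continuous_normSq.comp (continuous_apply j)
  set T : Set (ι → ℂ) := {h | h ∈ F ∧ ∑ j, Complex.normSq (h j) = 1} with hT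
  have hTc : IsCompact T := by
    refine Metric.isCompact_of_isClosed_isBounded ?_ ?_
    · refine (F.closed_of_finiteDimensional).inter (isClosed_eq ?_ continuous_const)
      exact continuous_finsetSum _ fun j _ => Complex.continuous_normSq.comp (continuous_apply j)
    · refine (Metric.isBounded_closedBall (x := (0 : ι → ℂ)) (r := 1)).subset fun h hh => ?_
      rw [mem_closedBall_zero_iff, pi_norm_le_iff_of_nonneg zero_le_one]
      intro j
      have : Complex.normSq (h j) ≤ 1 := hh.2 ▸
        Finset.single_le_sum (f := fun j => Complex.normSq (h j))
          (fun j _ => Complex.normSq_nonneg _) (Finset.mem_univ j)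
      rw [Complex.normSq_eq_norm_sq] at this
      exact (sq_le_one_iff₀ (norm_nonneg _)).1 this
  have hcomp := isCompact_convexHull_of_finiteDimensional (hTc.image hqc)
  set σ := ∑ j, l j with hσ
  have hmem : σ⁻¹ • l ∈ convexHull ℝ (q '' T) := by
    by_contra hnot
    obtain ⟨f, u, hfl, hfT⟩ := geometric_hahn_banach_point_closed (convex_convexHull ℝ _)
      hcomp.isClosed hnot
    have hf (g : ι → ℝ) : f g = ∑ j, f (Pi.single j 1) * g j := by
      conv_lhs => rw [pi_eq_sum_univ' g]
      rw [map_sum]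
      refine Finset.sum_congr rfl fun j _ => ?_
      rw [map_smul, smul_eq_mul, mul_comm]
    -- Both `σ⁻¹ • l` and the squares of elements of `T` have total mass one, so subtracting the constant
    -- `u` from the separating functional moves the threshold to zero.
    have hneg : ∑ j, (f (Pi.single j 1) - u) * l j < 0 := by
      simp only [sub_mul, Finset.sum_sub_distrib, ← Finset.mul_sum, ← hσ]
      rw [← hf]
      rw [map_smul, smul_eq_mul, inv_mul_lt_iff₀ hpos] at hfl
      linarith
    refine absurd (H _ fun h hh => ?_) hneg.not_ge
    simp only [sub_mul, Finset.sum_sub_distrib, ← Finset.mul_sum]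
    rw [← hf fun j => Complex.normSq (h j)]
    set s := ∑ j, Complex.normSq (h j) with hs
    have hs0 : 0 ≤ s := Finset.sum_nonneg fun j _ => Complex.normSq_nonneg _
    rcases hs0.eq_or_lt with hs0 | hs0
    · have : (fun j => Complex.normSq (h j)) = 0 := by
        funext j
        exact (Finset.sum_eq_zero_iff_of_nonneg fun j _ => Complex.normSq_nonneg _).1
          hs0.symm j (Finset.mem_univ j)
      rw [this, ← hs0]; simp
    · have hsc (j) : Complex.normSq ((((√s)⁻¹ : ℝ) : ℂ) * h j) = s⁻¹ * Complex.normSq (h j) := by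
        rw [Complex.normSq_mul, Complex.normSq_ofReal, ← mul_inv, Real.mul_self_sqrt hs0.le]
      have hin : s⁻¹ • (fun j => Complex.normSq (h j)) ∈ convexHull ℝ (q '' T) := by
        refine subset_convexHull ℝ _ ⟨(((√s)⁻¹ : ℝ) : ℂ) • h, ⟨F.smul_mem _ hh, ?_⟩, ?_⟩
        · simp only [Pi.smul_apply, smul_eq_mul, hsc, ← Finset.mul_sum, ← hs]
          exact inv_mul_cancel₀ hs0.ne'
        · funext j; simp only [hq, Pi.smul_apply, smul_eq_mul, hsc]
      have := hfT _ hin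
      rw [map_smul, smul_eq_mul, lt_inv_mul_iff₀ hs0] at this
      linarith
  obtain ⟨κ, _, w, z, hw, -, hz, hsum⟩ := mem_convexHull_iff_exists_fintype.1 hmem
  choose g hg hgz using hz
  let e := Fintype.equivFin κ
  refine ⟨Fintype.card κ, fun i => ((√(σ * w (e.symm i)) : ℝ) : ℂ) • g (e.symm i),
    fun i => F.smul_mem _ (hg _).1, fun j => ?_⟩
  rw [e.symm.sum_comp fun i => Complex.normSq ((((√(σ * w i) : ℝ) : ℂ) • g i) j)]
  have := congrArg (fun f => σ * f j) hsum
  simp only [Pi.smul_apply, smul_eq_mul, Finset.sum_apply, mul_inv_cancel_left₀ hpos.ne'] at this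
  rw [← this, Finset.mul_sum]
  refine Finset.sum_congr rfl fun i _ => ?_
  rw [Pi.smul_apply, smul_eq_mul, Complex.normSq_mul, Complex.normSq_ofReal,
    Real.mul_self_sqrt (mul_nonneg hpos.le (hw i)), ← hgz i]
  simp only [hq]; ring

/-- Structure theorem: a `Rot_N`-equivariant Hermitian psd lift of size `d` of the
regular `N`-gon yields an sos-valid set of frequencies `K ⊆ ℤ/Nℤ` with `|K| ≤ d`. -/
theorem equivariant_psd_lift_gives_sosValid (N d : ℕ) (hN : 3 ≤ N) (hd : 1 ≤ d)
    (L : AffineSubspace ℝ (Matrix (Fin d) (Fin d) ℂ))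
    (hHerm : ∀ Y ∈ L, Y.IsHermitian)
    (π' : Matrix (Fin d) (Fin d) ℂ →ₗ[ℝ] ℝ × ℝ)
    (ρ : ZMod N → Matrix.GeneralLinearGroup (Fin d) ℂ)
    (hρ : ∀ g g' : ZMod N, ρ (g + g') = ρ g * ρ g')
    (hlift : convexHull ℝ
        {p : ℝ × ℝ | ∃ i ∈ Finset.Icc (1:ℕ) N,
          p = (Real.cos ((2 * (i : ℝ) - 1) * π / N),
               Real.sin ((2 * (i : ℝ) - 1) * π / N))} =
      π' '' {Y | Y ∈ L ∧ Y.PosSemidef})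
    (hinv : ∀ g : ZMod N, ∀ Y ∈ L,
      (ρ g : Matrix (Fin d) (Fin d) ℂ) * Y * (ρ g : Matrix (Fin d) (Fin d) ℂ)ᴴ ∈ L)
    (hequiv : ∀ g : ZMod N, ∀ Y ∈ L, Y.PosSemidef →
      π' ((ρ g : Matrix (Fin d) (Fin d) ℂ) * Y * (ρ g : Matrix (Fin d) (Fin d) ℂ)ᴴ) =
        (Real.cos (2 * π * (g.val : ℝ) / N) * (π' Y).1 -
            Real.sin (2 * π * (g.val : ℝ) / N) * (π' Y).2,
         Real.sin (2 * π * (g.val : ℝ) / N) * (π' Y).1 +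
            Real.cos (2 * π * (g.val : ℝ) / N) * (π' Y).2)) :
    ∃ K : Finset (ZMod N), K.card ≤ d ∧ SosValid N K := by
  classical
  have : NeZero N := ⟨by omega⟩
  have hN0 : (0 : ℝ) < N := by positivity
  have hN3 : (3 : ℝ) ≤ N := by exact_mod_cast hN
  have hfacet : ∀ Y ∈ L, Y.PosSemidef → (π' Y).1 ≤ Real.cos (π / N) := by
    intro Y hYL hY
    have hmem : π' Y ∈ π' '' {Y | Y ∈ L ∧ Y.PosSemidef} := ⟨Y, ⟨hYL, hY⟩, rfl⟩
    rw [← hlift] at hmem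
    have hconv : Convex ℝ {p : ℝ × ℝ | p.1 ≤ Real.cos (π / N)} :=
      convex_halfSpace_le (LinearMap.fst ℝ ℝ ℝ).isLinear _
    refine convexHull_min ?_ hconv hmem
    rintro _ ⟨i, hi, rfl⟩
    obtain ⟨hi1, hi2⟩ := Finset.mem_Icc.1 hi
    have hi1 : (1 : ℝ) ≤ i := by exact_mod_cast hi1
    have hi2 : (i : ℝ) ≤ N := by exact_mod_cast hi2
    refine cos_le_cos_of_mem_Icc (by positivity) ?_ ?_
    · gcongr
      nlinarith [Real.pi_pos]
    · rw [le_sub_iff_add_le, ← add_div, div_le_iff₀ hN0]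
      nlinarith [Real.pi_pos]
  obtain ⟨Y₀, ⟨hY₀L, hY₀⟩, hπY₀⟩ :
      (Real.cos (π / N), Real.sin (π / N)) ∈ π' '' {Y | Y ∈ L ∧ Y.PosSemidef} := by
    rw [← hlift]
    refine subset_convexHull ℝ _ ⟨1, Finset.mem_Icc.2 ⟨le_rfl, by omega⟩, ?_⟩
    norm_num
  let Y : ZMod N → Matrix (Fin d) (Fin d) ℂ := fun j =>
    (ρ j : Matrix (Fin d) (Fin d) ℂ) * Y₀ * (ρ j : Matrix (Fin d) (Fin d) ℂ)ᴴ
  have hYπ (j : ZMod N) : (π' (Y j)).1 = Real.cos ((2 * (j.val : ℝ) + 1) * π / N) := by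
    simp only [Y]
    rw [hequiv j Y₀ hY₀L hY₀, hπY₀]
    simp only
    rw [← Real.cos_add]
    congr 1
    ring
  obtain ⟨K, hK, hKρ⟩ := exists_frequencies_of_representation N d
    (fun g => (ρ g : Matrix (Fin d) (Fin d) ℂ)) (fun g g' => by rw [hρ]; rfl)
  refine ⟨K, hK, ?_⟩
  set l : ZMod N → ℝ := fun j =>
    Real.cos (π / N) - Real.cos ((2 * (j.val : ℝ) + 1) * π / N) with hl
  have hl0 : l 0 = 0 := by simp [hl]
  have hlY (j : ZMod N) : l j = Real.cos (π / N) - (π' (Y j)).1 := by rw [hYπ]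
  have hYpsd (j : ZMod N) : (Y j).PosSemidef := hY₀.mul_mul_conjTranspose_same _
  have hlpos : 0 < ∑ j, l j := by
    refine Finset.sum_pos' (fun j _ => ?_) ⟨1, Finset.mem_univ _, ?_⟩
    · rw [hlY]
      exact sub_nonneg.2 (hfacet _ (hinv j Y₀ hY₀L) (hYpsd j))
    · have : (1 : ZMod N).val = 1 := ZMod.val_one'' (by omega)
      simp only [hl, this]
      refine sub_pos.2 (Real.cos_lt_cos_of_nonneg_of_le_pi (by positivity) ?_ ?_)
      · rw [div_le_iff₀ hN0]
        push_cast
        nlinarith [Real.pi_pos]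
      · gcongr
        push_cast
        nlinarith [Real.pi_pos]
  obtain ⟨m, h, hh, hsum⟩ := exists_sos_of_dual_nonneg (supportedSubmodule N K) l hlpos <| by
    intro c hc
    have hpsd : (∑ j, c j • Y j).PosSemidef :=
      posSemidef_sum_smul_conj _ _ hKρ hY₀ c hc
    -- Adding `t • Y 0` is harmless because `l 0 = 0`, and it makes the coefficient sum positive.
    set t : ℝ := |∑ j, c j| + 1 with ht
    have ht0 : 0 ≤ t := by positivity
    set s : ℝ := ∑ j, c j + t with hs
    have hs0 : 0 < s := by linarith [neg_abs_le (∑ j, c j)]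
    set w : ZMod N → ℝ := fun j => s⁻¹ * (c j + (Pi.single 0 t : ZMod N → ℝ) j) with hw
    have hwlin (E : Type) [AddCommGroup E] [Module ℝ E] (y : ZMod N → E) :
        ∑ j, w j • y j = s⁻¹ • (∑ j, c j • y j + t • y 0) := by
      simp only [hw, mul_smul, add_smul, ← Finset.smul_sum, Finset.sum_add_distrib]
      congr 2
      rw [Finset.sum_eq_single 0 (fun j _ hj => by rw [Pi.single_eq_of_ne hj, zero_smul])
        (fun h => absurd (Finset.mem_univ _) h), Pi.single_eq_same]
    have hw1 : ∑ j, w j = 1 := by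
      have := hwlin ℝ fun _ => 1
      simp only [smul_eq_mul, mul_one] at this
      rw [this, ← hs, inv_mul_cancel₀ hs0.ne']
    have hmem : ∑ j, w j • Y j ∈ L :=
      affineSubspace_sum_smul_mem L w hw1 Y fun j => hinv j Y₀ hY₀L
    have hwpsd : (∑ j, w j • Y j).PosSemidef := by
      rw [hwlin]
      exact (hpsd.add ((hYpsd 0).smul ht0)).smul (inv_nonneg.2 hs0.le)
    have hval := hfacet _ hmem hwpsd
    have hwl : ∑ j, w j * l j = Real.cos (π / N) - (π' (∑ j, w j • Y j)).1 := by
      simp only [hlY, mul_sub, Finset.sum_sub_distrib, ← Finset.sum_mul, hw1, one_mul, map_sum,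
        map_smul, Prod.fst_sum, Prod.smul_fst, smul_eq_mul]
    have hwl' := hwlin ℝ l
    simp only [smul_eq_mul, hl0, mul_zero, add_zero] at hwl'
    have : 0 ≤ s⁻¹ * ∑ j, c j * l j := by rw [← hwl', hwl]; linarith
    exact nonneg_of_mul_nonneg_right this (inv_pos.2 hs0)
  exact ⟨m, h, hh, hsum⟩
end

section
/- Let N ≥ 3 and d ≥ 1 be integers. Suppose the regular N-gon admits a Hermitian psd lift of size d that is equivariant with respect to the rotation group Rot_N ≅ ℤ/Nℤ; i.e., suppose there exist: an ℝ-affine subspace L of the d×d complex matrices all of whose elements are Hermitian; an ℝ-linear map π from d×d complex Hermitian matrices to ℝ²; and a map ρ : ℤ/Nℤ → GL_d(ℂ) with ρ(g + g') = ρ(g)ρ(g') for all g, g'; such that: (1) conv(𝒳_N) = π({Y ∈ L : Y positive semidefinite}); (2) ρ(g) Y ρ(g)* ∈ L for all g ∈ ℤ/Nℤ and all Y ∈ L; and (3) π(ρ(g) Y ρ(g)*) = R_g · π(Y) for all g ∈ ℤ/Nℤ and all positive semidefinite Y ∈ L, where R_g is the rotation of ℝ² by angle 2πg/N and ρ(g)*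 is the conjugate transpose. Then d ≥ ln(N/2). -/
/-!
The proof exhibits, when `d < ln (N / 2)`, a psd matrix `Z ∈ L` whose image under the projection
lies outside the polygon.

Let `Y ∈ L` be psd over the vertex at angle `π/N`. For real weights `μ` on `ℤ/Nℤ` of total mass one,
`Z = ∑ μ(g) ρ(g) Y ρ(g)ᴴ` lies in the affine space `L`. Expanding `ρ(g) = ∑ₖ χ(kg) Eₖ` in Fourier
series, with `χ` the standard character and `φ(k) = ∑ μ(g) χ(gk)`, gives
`Z = ∑ φ(k - k') Eₖ Y Eₖ'ᴴ`, and equivariance shows that, in complex notation, the projection of `Z`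
is `φ(1)` times the chosen vertex. Take `φ(k) = exp(iπk/N)` for `|k| ≤ r` and `φ(k) = 0` otherwise
(`arcChar`): the total mass is `φ(0) = 1`, and `Z` projects to the unit vector at angle `2π/N`,
midway between two vertices (`rotated_vertex_notMem`).

It remains to choose `r` such that `Z` is psd. At most `d` of the `Eₖ` are nonzero
(`card_support_dft_le`). By a clustering argument (`exists_cyclic_clustering`) there is a scale
`1 ≤ r ≤ 2 ^ (d - 1)` at which "at cyclic distance at most `r`" is an equivalence relation on these
frequencies. As `3 r < N`, no wrap-around occurs within a class, so the kernel `φ(k - k')` is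
a direct sum of rank-one psd blocks (`psd_of_clustering`).
-/

open Real Finset Matrix
open scoped ComplexOrder

/-- Single-linkage clustering at a self-consistent scale. `c` sends a point to the representative of
its cluster, `s` contains the labels in use, and `D l` bounds the diameter of the cluster `l`. While
two clusters lie within distance `r`, they are merged: the new diameter is at most the sum of the
two old ones plus `r`, so the sum of all diameter bounds grows by at most `r` and stays below `2r`.
At most `n` merges are possible, and in the end `δ x y ≤ r'` holds exactly within clusters. -/
theorem exists_clustering {α : Type*} [DecidableEq α] (K : Finset α) (δ : α → α → ℕ)
    (hsymm : ∀ x y, δ x y = δ y x) (htri : ∀ x y z, δ x z ≤ δ x y + δ y z) (n : ℕ) :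
    ∀ (c : α → α) (s : Finset α) (D : α → ℕ) (r : ℕ), s.card ≤ n + 1 → 1 ≤ r →
      (∀ x ∈ K, c x ∈ K ∧ c x ∈ s ∧ c (c x) = c x) →
      (∀ x ∈ K, ∀ y ∈ K, c x = c y → δ x y ≤ D (c x)) →
      ∑ l ∈ s, D l ≤ r →
      ∃ (c' : α → α) (r' : ℕ), 1 ≤ r' ∧ r' ≤ r * 2 ^ n ∧
        (∀ x ∈ K, c' x ∈ K ∧ c' (c' x) = c' x) ∧
        ∀ x ∈ K, ∀ y ∈ K, (δ x y ≤ r' ↔ c' x = c' y) := by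
  induction n with
  | zero =>
    intro c s D r hs hr hc hD hsum
    refine ⟨c, r, hr, by simp, fun x hx => ⟨(hc x hx).1, (hc x hx).2.2⟩, fun x hx y hy => ?_⟩
    have h : c x = c y := Finset.card_le_one.1 (by simpa using hs) _ (hc x hx).2.1 _ (hc y hy).2.1
    refine ⟨fun _ => h, fun _ => (hD x hx y hy h).trans (le_trans ?_ hsum)⟩
    exact Finset.single_le_sum (f := D) (fun _ _ => Nat.zero_le _) (hc x hx).2.1
  | succ n ih =>
    intro c s D r hs hr hc hD hsum
    by_cases hm : ∃ x ∈ K, ∃ y ∈ K, δ x y ≤ r ∧ c x ≠ c y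
    · obtain ⟨x, hx, y, hy, hxy, hne⟩ := hm
      have hmerge := ih (fun z => if c z = c y then c x else c z)
        (s.erase (c y)) (fun l => if l = c x then D (c x) + D (c y) + r else D l) (2 * r)
        (by rw [Finset.card_erase_of_mem (hc y hy).2.1]; omega) (by omega)
      refine Exists.elim (hmerge ?_ ?_ ?_) ?_
      · intro z hz
        have hz' := hc z hz
        have hx' := hc x hx
        by_cases h : c z = c y
        · simp [h, hx', hne]
        · simp [h, hz']
      · have key : ∀ z ∈ K, ∀ w ∈ K, c z = c x → c w = c y →
            δ z w ≤ D (c x) + D (c y) + r := by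
          intro z hz w hw hzx hwy
          have a1 := hD z hz x hx hzx
          have a2 := hD w hw y hy hwy
          have a3 := htri z x w
          have a4 := htri x y w
          rw [hsymm y w] at a4
          rw [hzx] at a1
          rw [hwy] at a2
          omega
        intro z hz w hw h
        have hzw := hD z hz w hw
        by_cases h1 : c z = c y <;> by_cases h2 : c w = c y
        · have := hzw (h1.trans h2.symm)
          simp only [h1, if_true] at this ⊢
          omega
        · simp only [h1, h2, if_true, if_false] at h ⊢
          rw [hsymm]
          exact key w hw z hz h.symm h1
        · simp only [h1, h2, if_true, if_false] at h ⊢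
          simp only [h, if_true]
          exact key z hz w hw h h2
        · simp only [h1, h2, if_false] at h ⊢
          have := hzw h
          split_ifs with h3
          · rw [h3] at this; omega
          · exact this
      · have hmem : c x ∈ s.erase (c y) := Finset.mem_erase.2 ⟨hne, (hc x hx).2.1⟩
        have e1 := Finset.add_sum_erase s D (hc y hy).2.1
        have e2 := Finset.add_sum_erase _ D hmem
        rw [← Finset.add_sum_erase _ _ hmem, if_pos rfl,
          Finset.sum_congr rfl (fun l hl => if_neg (Finset.ne_of_mem_erase hl))]
        change D (c x) + D (c y) + r + ∑ l ∈ (s.erase (c y)).erase (c x), D l ≤ 2 * r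
        omega
      · rintro c' ⟨r', h1, h2, h3, h4⟩
        exact ⟨c', r', h1, by rw [pow_succ]; linarith, h3, h4⟩
    · push Not at hm
      refine ⟨c, r, hr, Nat.le_mul_of_pos_right _ (by positivity),
        fun x hx => ⟨(hc x hx).1, (hc x hx).2.2⟩, fun x hx y hy => ⟨hm x hx y hy, fun h => ?_⟩⟩
      exact (hD x hx y hy h).trans ((Finset.single_le_sum (f := D)
        (fun _ _ => Nat.zero_le _) (hc x hx).2.1).trans hsum)

/-- For at most `d` residues mod `N`, there is a scale `1 ≤ r ≤ 2 ^ (d - 1)` at which being at cyclic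
distance at most `r` is an equivalence relation on them, with representatives given by `c`. -/
theorem exists_cyclic_clustering (N : ℕ) [NeZero N] (K : Finset (ZMod N)) (d : ℕ) (hd : 1 ≤ d)
    (hK : K.card ≤ d) :
    ∃ (c : ZMod N → ZMod N) (r : ℕ), 1 ≤ r ∧ r ≤ 2 ^ (d - 1) ∧
      (∀ x ∈ K, c x ∈ K ∧ c (c x) = c x) ∧
      ∀ x ∈ K, ∀ y ∈ K, ((x - y).valMinAbs.natAbs ≤ r ↔ c x = c y) := by
  obtain ⟨c, r, h1, h2, h3, h4⟩ := exists_clustering K (fun x y => (x - y).valMinAbs.natAbs)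
    (fun x y => by rw [← ZMod.natAbs_valMinAbs_neg, neg_sub])
    (fun x y z => by
      have := ZMod.natAbs_valMinAbs_add_le (x - y) (y - z)
      rw [sub_add_sub_cancel] at this
      exact this.trans (Int.natAbs_add_le _ _))
    (d - 1) id K (fun _ => 0) 1 (by omega) le_rfl (fun x hx => ⟨hx, hx, rfl⟩)
    (fun x _ y _ h => by simp only [id] at h; simp [h]) (by simp)
  exact ⟨c, r, h1, by simpa using h2, h3, h4⟩

theorem fourier_expansion {N : ℕ} [NeZero N] {M : Type*} [AddCommGroup M] [Module ℂ M]
    (F : ZMod N → M) (g : ZMod N) :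
    F g = ∑ k, ZMod.stdAddChar (k * g) • ((N : ℂ)⁻¹ • ZMod.dft F k) := by
  have h := congrFun (ZMod.dft.symm_apply_apply F) g
  rw [ZMod.invDFT_apply] at h
  rw [← h, Finset.smul_sum]
  exact Finset.sum_congr rfl fun k _ => smul_comm _ _ _

/-- A representation of `ℤ/Nℤ` of dimension `d` involves at most `d` characters: the nonzero Fourier
coefficients of `ρ` map into eigenspaces of `ρ 1` for distinct eigenvalues. -/
theorem card_support_dft_le {N d : ℕ} [NeZero N] (ρ : ZMod N → Matrix (Fin d) (Fin d) ℂ)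
    (hρ : ∀ g g', ρ (g + g') = ρ g * ρ g') :
    (Finset.univ.filter fun k => ZMod.dft ρ k ≠ 0).card ≤ d := by
  have heig : ∀ k, ρ 1 * ZMod.dft ρ k = ZMod.stdAddChar k • ZMod.dft ρ k := by
    intro k
    rw [ZMod.dft_apply, Finset.mul_sum, Finset.smul_sum, ← Equiv.sum_comp (Equiv.addLeft (1 : ZMod N))
      (fun j => ZMod.stdAddChar k • ZMod.stdAddChar (-(j * k)) • ρ j)]
    refine Finset.sum_congr rfl fun j _ => ?_
    rw [Equiv.coe_addLeft, hρ, smul_smul, ← AddChar.map_add_eq_mul, Matrix.mul_smul]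
    congr 2
    ring
  have hv : ∀ k : {k // ZMod.dft ρ k ≠ 0}, ∃ v : Fin d → ℂ, ZMod.dft ρ k *ᵥ v ≠ 0 := by
    rintro ⟨k, hk⟩
    by_contra! h
    exact hk (Matrix.ext_of_mulVec_single fun i => by
      rw [h, Matrix.zero_mulVec])
  choose v hv using hv
  have hli := Module.End.eigenvectors_linearIndependent' (Matrix.toLin' (ρ 1))
    (fun k : {k // ZMod.dft ρ k ≠ 0} => (ZMod.stdAddChar (k : ZMod N) : ℂ))
    (fun a b h => Subtype.ext (ZMod.injective_stdAddChar h))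
    (fun k => ZMod.dft ρ k *ᵥ v k)
    (fun k => ⟨by
      rw [Module.End.mem_eigenspace_iff, Matrix.toLin'_apply, Matrix.mulVec_mulVec, heig,
        Matrix.smul_mulVec], hv k⟩)
  have := hli.fintype_card_le_finrank
  rw [Fintype.card_subtype] at this
  simpa using this

/-- The function on `ℤ/Nℤ` that agrees with the non-periodic character `m ↦ exp (iπm/N)` on the
integers `|m| ≤ r` (read through the representative of least absolute value), and vanishes
elsewhere. It imitates evaluation at a point of the circle that is half a step away from the
vertices. -/
noncomputable def arcChar (N r : ℕ) (k : ZMod N) : ℂ :=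
  if k.valMinAbs.natAbs ≤ r then Complex.exp ((π / N * (k.valMinAbs : ℝ) : ℝ) * Complex.I) else 0

theorem conj_arcChar {N r : ℕ} [NeZero N] (hr : 2 * r < N) (k : ZMod N) :
    star (arcChar N r k) = arcChar N r (-k) := by
  unfold arcChar
  rw [ZMod.natAbs_valMinAbs_neg]
  split_ifs with h
  · have : (-k).valMinAbs = -k.valMinAbs := by
      refine ZMod.valMinAbs_neg_of_ne_half fun h2 => ?_
      have := ZMod.valMinAbs_def_pos k
      rw [this, if_pos (by omega)] at h
      rw [Int.natAbs_natCast] at h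
      omega
    rw [this, Complex.star_def, ← Complex.exp_conj]
    simp
  · simp

theorem conj_stdAddChar {N : ℕ} [NeZero N] (k : ZMod N) :
    star (ZMod.stdAddChar k : ℂ) = ZMod.stdAddChar (-k) := by
  rw [Complex.star_def, AddChar.map_neg_eq_conj]

/-- The signed weights on the rotation group whose Fourier transform is `arcChar N r`; they are
complex-valued here and shown to be real in `arcWeight_re`. -/
noncomputable def arcWeight (N r : ℕ) [NeZero N] (g : ZMod N) : ℂ :=
  (N : ℂ)⁻¹ • ZMod.dft (arcChar N r) g

theorem sum_arcWeight {N r : ℕ} [NeZero N] (k : ZMod N) :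
    ∑ g, ZMod.stdAddChar (g * k) * arcWeight N r g = arcChar N r k :=
  (fourier_expansion (arcChar N r) k).symm

theorem arcWeight_re {N r : ℕ} [NeZero N] (hr : 2 * r < N) (g : ZMod N) :
    ((arcWeight N r g).re : ℂ) = arcWeight N r g := by
  rw [← Complex.conj_eq_iff_re, ← Complex.star_def, arcWeight, ZMod.dft_apply]
  simp only [smul_eq_mul, star_mul', star_sum, conj_stdAddChar, conj_arcChar hr]
  congr 1
  · simp
  · rw [← Equiv.sum_comp (Equiv.neg (ZMod N))]
    simp

/-- If closeness at scale `r` is an equivalence relation on the frequencies `K` of `E`, then the kernel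
`arcChar N r (k - k')` on `K` is a direct sum of rank-one blocks `u k * conj (u k')`, one for each
cluster; hence it multiplies a psd matrix into a psd matrix. -/
theorem psd_of_clustering {N d r : ℕ} [NeZero N] (hr : 3 * r < N)
    (E : ZMod N → Matrix (Fin d) (Fin d) ℂ) (K : Finset (ZMod N)) (hE : ∀ k, k ∉ K → E k = 0)
    (c : ZMod N → ZMod N) (hc : ∀ x ∈ K, c x ∈ K ∧ c (c x) = c x)
    (hcr : ∀ x ∈ K, ∀ y ∈ K, ((x - y).valMinAbs.natAbs ≤ r ↔ c x = c y))
    (Y : Matrix (Fin d) (Fin d) ℂ) (hY : Y.PosSemidef) :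
    (∑ k, ∑ k', arcChar N r (k - k') • (E k * Y * (E k')ᴴ)).PosSemidef := by
  -- The phase of a frequency relative to the representative of its cluster.
  let u : ZMod N → ℂ := fun k =>
    Complex.exp ((π / N * ((k - c k).valMinAbs : ℝ) : ℝ) * Complex.I)
  let B : ZMod N → Matrix (Fin d) (Fin d) ℂ := fun l => ∑ k, (if c k = l then u k else 0) • E k
  have hB : ∑ k, ∑ k', arcChar N r (k - k') • (E k * Y * (E k')ᴴ) = ∑ l, B l * Y * (B l)ᴴ := by
    have hexp : ∀ l, B l * Y * (B l)ᴴ = ∑ k, ∑ k',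
        ((if c k = l then u k else 0) * star (if c k' = l then u k' else 0)) •
          (E k * Y * (E k')ᴴ) := by
      intro l
      simp only [B, Matrix.conjTranspose_sum, Finset.sum_mul, Finset.mul_sum,
        Matrix.conjTranspose_smul, Matrix.smul_mul, Matrix.mul_smul, smul_smul]
      rw [Finset.sum_comm]
      simp only [mul_comm]
    simp only [hexp]
    symm
    rw [Finset.sum_comm]
    refine Finset.sum_congr rfl fun k _ => ?_
    rw [Finset.sum_comm]
    refine Finset.sum_congr rfl fun k' _ => ?_
    rw [← Finset.sum_smul]
    symm
    by_cases hk : k ∈ K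
    swap
    · simp [hE k hk]
    by_cases hk' : k' ∈ K
    swap
    · simp [hE k' hk']
    congr 1
    have hsum : ∑ l, (if c k = l then u k else 0) * star (if c k' = l then u k' else 0) =
        u k * star (if c k' = c k then u k' else 0) := by
      simp [ite_mul]
    rw [hsum, arcChar]
    by_cases h : c k = c k'
    · rw [if_pos ((hcr k hk k' hk').2 h), if_pos h.symm]
      have h0 := (hcr k hk k' hk').2 h
      have h1 := (hcr k hk _ (hc k hk).1).2 (hc k hk).2.symm
      have h2 := (hcr k' hk' _ (hc k' hk').1).2 (hc k' hk').2.symm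
      -- Both sides agree mod `N` and differ by at most `3 * r < N`.
      have hlift : (k - k').valMinAbs = (k - c k).valMinAbs - (k' - c k').valMinAbs := by
        rw [← sub_eq_zero]
        refine Int.eq_zero_of_abs_lt_dvd (m := N) ?_ (by rw [abs_lt]; omega)
        rw [← ZMod.intCast_zmod_eq_zero_iff_dvd]
        push_cast
        rw [h]
        ring
      simp only [u]
      rw [hlift, Complex.star_def, ← Complex.exp_conj, ← Complex.exp_add]
      congr 1
      simp only [map_mul, Complex.conj_ofReal, Complex.conj_I]
      push_cast
      ring
    · rw [if_neg (fun h' => h ((hcr k hk k' hk').1 h')), if_neg (fun h' => h h'.symm)]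
      simp
  rw [hB]
  exact Matrix.posSemidef_sum _ fun l _ => hY.mul_mul_conjTranspose_same _

/-- The point of the unit circle at angle `2π/N` lies midway between two vertices of the polygon,
hence outside its convex hull: all vertices satisfy `⟨·, p⟩ < 1` for this unit vector `p`. -/
theorem rotated_vertex_notMem (N : ℕ) (hN : 3 ≤ N) :
    (Real.cos (2 * π / N), Real.sin (2 * π / N)) ∉ convexHull ℝ
        {p : ℝ × ℝ | ∃ i ∈ Finset.Icc (1:ℕ) N,
          p = (Real.cos ((2 * (i : ℝ) - 1) * π / N),
               Real.sin ((2 * (i : ℝ) - 1) * π / N))} := by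
  intro hmem
  let f : ℝ × ℝ →ₗ[ℝ] ℝ := Real.cos (2 * π / N) • LinearMap.fst ℝ ℝ ℝ +
    Real.sin (2 * π / N) • LinearMap.snd ℝ ℝ ℝ
  have hsub : convexHull ℝ
        {p : ℝ × ℝ | ∃ i ∈ Finset.Icc (1:ℕ) N,
          p = (Real.cos ((2 * (i : ℝ) - 1) * π / N),
               Real.sin ((2 * (i : ℝ) - 1) * π / N))} ⊆ {p | f p < 1} := by
    refine convexHull_min ?_ (convex_halfSpace_lt f.isLinear 1)
    rintro p ⟨i, -, rfl⟩
    have hf : f (Real.cos ((2 * (i : ℝ) - 1) * π / N), Real.sin ((2 * (i : ℝ) - 1) * π / N)) =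
        Real.cos (2 * π / N - (2 * (i : ℝ) - 1) * π / N) := by
      simp [f, Real.cos_sub]
    rw [Set.mem_ofPred_eq, hf]
    refine lt_of_le_of_ne (Real.cos_le_one _) fun h => ?_
    obtain ⟨m, hm⟩ := (Real.cos_eq_one_iff _).1 h
    have hN0 : (N : ℝ) ≠ 0 := by positivity
    have hpi := Real.pi_ne_zero
    field_simp at hm
    -- The angle difference is an odd multiple of `π / N`, so it is no multiple of `2π`.
    have hm' : (m * N * 2 : ℤ) = 3 - 2 * i := by
      have : (m * N * 2 : ℝ) = 3 - 2 * i := by linarith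
      exact_mod_cast this
    omega
  have := hsub hmem
  simp only [Set.mem_ofPred_eq, f, LinearMap.add_apply, LinearMap.smul_apply, LinearMap.fst_apply,
    LinearMap.snd_apply, smul_eq_mul] at this
  nlinarith [Real.sin_sq_add_cos_sq (2 * π / N)]

theorem three_mul_two_pow_lt {N d : ℕ} (hd : 1 ≤ d) (hN : 0 < N)
    (h : (d : ℝ) < Real.log (N / 2)) : 3 * 2 ^ (d - 1) < N := by
  have h1 : Real.exp d < N / 2 := (Real.lt_log_iff_exp_lt (by positivity)).1 h
  have h2 : (2 : ℝ) ^ d ≤ Real.exp d := by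
    rw [← Real.exp_one_pow]
    gcongr
    have := Real.add_one_le_exp 1
    linarith
  obtain ⟨n, rfl⟩ := Nat.exists_eq_add_of_le' hd
  have h3 : (3 * 2 ^ n : ℝ) < N := by
    have : (0 : ℝ) < 2 ^ n := by positivity
    rw [pow_succ] at h2
    linarith
  simpa using (by exact_mod_cast h3 : 3 * 2 ^ n < N)

/-- Any Hermitian psd lift of the regular `N`-gon that is equivariant with respect to
the rotation group `Rot_N ≅ ℤ/Nℤ` has size at least `ln(N/2)`. -/
theorem equivariant_psd_lift_lb (N d : ℕ) (hN : 3 ≤ N) (hd : 1 ≤ d)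
    (L : AffineSubspace ℝ (Matrix (Fin d) (Fin d) ℂ))
    (hHerm : ∀ Y ∈ L, Y.IsHermitian)
    (π' : Matrix (Fin d) (Fin d) ℂ →ₗ[ℝ] ℝ × ℝ)
    (ρ : ZMod N → Matrix.GeneralLinearGroup (Fin d) ℂ)
    (hρ : ∀ g g' : ZMod N, ρ (g + g') = ρ g * ρ g')
    (hlift : convexHull ℝ
        {p : ℝ × ℝ | ∃ i ∈ Finset.Icc (1:ℕ) N,
          p = (Real.cos ((2 * (i : ℝ) - 1) * π / N),
               Real.sin ((2 * (i : ℝ) - 1) * π / N))} =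
      π' '' {Y | Y ∈ L ∧ Y.PosSemidef})
    (hinv : ∀ g : ZMod N, ∀ Y ∈ L,
      (ρ g : Matrix (Fin d) (Fin d) ℂ) * Y * (ρ g : Matrix (Fin d) (Fin d) ℂ)ᴴ ∈ L)
    (hequiv : ∀ g : ZMod N, ∀ Y ∈ L, Y.PosSemidef →
      π' ((ρ g : Matrix (Fin d) (Fin d) ℂ) * Y * (ρ g : Matrix (Fin d) (Fin d) ℂ)ᴴ) =
        (Real.cos (2 * π * (g.val : ℝ) / N) * (π' Y).1 -
            Real.sin (2 * π * (g.val : ℝ) / N) * (π' Y).2,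
         Real.sin (2 * π * (g.val : ℝ) / N) * (π' Y).1 +
            Real.cos (2 * π * (g.val : ℝ) / N) * (π' Y).2)) :
    Real.log (N / 2) ≤ (d : ℝ) := by
  by_contra! hlt
  have hsmall := three_mul_two_pow_lt hd (by omega) hlt
  have : NeZero N := ⟨by omega⟩
  let P : ZMod N → Matrix (Fin d) (Fin d) ℂ := fun g => (ρ g : Matrix (Fin d) (Fin d) ℂ)
  have hP : ∀ g g', P (g + g') = P g * P g' := fun g g' => by simp [P, hρ]
  obtain ⟨c, r, hr1, hr2, hc, hcr⟩ :=
    exists_cyclic_clustering N _ d hd (card_support_dft_le P hP)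
  have hr3 : 3 * r < N := by omega
  have hr4 : 2 * r < N := by omega
  obtain ⟨Y, ⟨hYL, hYpsd⟩, hYπ⟩ : (Real.cos (π / N), Real.sin (π / N)) ∈
      π' '' {Y | Y ∈ L ∧ Y.PosSemidef} := by
    rw [← hlift]
    refine subset_convexHull ℝ _ ⟨1, by simp; omega, ?_⟩
    norm_num
  have hone : (1 : ZMod N).valMinAbs = 1 := by
    have := ZMod.valMinAbs_natCast_of_le_half (n := N) (a := 1) (by omega)
    simpa using this
  have hsumw : ∑ g, (arcWeight N r g).re = 1 := by
    have h := sum_arcWeight (N := N) (r := r) 0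
    simp only [mul_zero, AddChar.map_zero_eq_one, one_mul] at h
    rw [← Complex.re_sum, h]
    simp [arcChar]
  -- An affine combination of the points `ρ(g) Y ρ(g)ᴴ` of `L`, with possibly negative weights.
  let Z : Matrix (Fin d) (Fin d) ℂ := ∑ g, (arcWeight N r g).re • (P g * Y * (P g)ᴴ)
  have hZL : Z ∈ L := by
    have h := affineCombination_mem_affineSpan hsumw (fun g => P g * Y * (P g)ᴴ)
    rw [Finset.affineCombination_eq_linear_combination _ _ _ hsumw] at h
    refine (affineSpan_le.2 ?_) h
    rintro _ ⟨g, rfl⟩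
    exact hinv g Y hYL
  have hZpsd : Z.PosSemidef := by
    let E : ZMod N → Matrix (Fin d) (Fin d) ℂ := fun k => (N : ℂ)⁻¹ • ZMod.dft P k
    have hZ : Z = ∑ k, ∑ k', arcChar N r (k - k') • (E k * Y * (E k')ᴴ) := by
      have hexp : ∀ g, (arcWeight N r g).re • (P g * Y * (P g)ᴴ) =
          ∑ k, ∑ k', (ZMod.stdAddChar (g * (k - k')) * arcWeight N r g) •
            (E k * Y * (E k')ᴴ) := by
        intro g
        have hPg : P g = ∑ k, ZMod.stdAddChar (k * g) • E k := fourier_expansion P g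
        rw [hPg, ← Complex.coe_smul, arcWeight_re hr4]
        simp only [Matrix.conjTranspose_sum, Finset.sum_mul, Finset.mul_sum,
          Matrix.conjTranspose_smul, Matrix.smul_mul, Matrix.mul_smul, smul_smul,
          Finset.smul_sum, conj_stdAddChar]
        rw [Finset.sum_comm]
        refine Finset.sum_congr rfl fun k _ => Finset.sum_congr rfl fun k' _ => ?_
        congr 1
        rw [mul_sub, sub_eq_add_neg, AddChar.map_add_eq_mul, mul_comm k, mul_comm k']
        ring
      simp only [Z, hexp]
      rw [Finset.sum_comm]
      refine Finset.sum_congr rfl fun k _ => ?_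
      rw [Finset.sum_comm]
      refine Finset.sum_congr rfl fun k' _ => ?_
      rw [← Finset.sum_smul, sum_arcWeight]
    rw [hZ]
    refine psd_of_clustering hr3 E _ (fun k hk => ?_) c hc hcr Y hYpsd
    simp only [Finset.mem_filter, Finset.mem_univ, true_and, not_not] at hk
    simp [E, hk]
  have hZπ : π' Z = (Real.cos (2 * π / N), Real.sin (2 * π / N)) := by
    have hC : ((π' Z).1 : ℂ) + (π' Z).2 * Complex.I =
        Complex.exp ((2 * π / N : ℝ) * Complex.I) := by
      have hterm : ∀ g : ZMod N, ((π' (P g * Y * (P g)ᴴ)).1 : ℂ) +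
          (π' (P g * Y * (P g)ᴴ)).2 * Complex.I =
          ZMod.stdAddChar (g * 1) * Complex.exp ((π / N : ℝ) * Complex.I) := by
        intro g
        have hg : (ZMod.stdAddChar (g * 1) : ℂ) =
            Complex.exp ((2 * π * (g.val : ℝ) / N : ℝ) * Complex.I) := by
          have := ZMod.stdAddChar_coe (N := N) (g.val : ℤ)
          rw [Int.cast_natCast, ZMod.natCast_zmod_val] at this
          rw [mul_one, this]
          congr 1
          push_cast
          ring
        rw [hg, hequiv g Y hYL hYpsd, hYπ, Complex.exp_mul_I, Complex.exp_mul_I]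
        push_cast
        linear_combination (-Complex.sin (2 * π * g.val / N) * Complex.sin (π / N)) *
          Complex.I_sq
      have hsum : ((π' Z).1 : ℂ) + (π' Z).2 * Complex.I =
          ∑ g, (ZMod.stdAddChar (g * 1) * arcWeight N r g) *
            Complex.exp ((π / N : ℝ) * Complex.I) := by
        simp only [Z, map_sum, map_smul, Prod.fst_sum, Prod.snd_sum, Prod.smul_fst,
          Prod.smul_snd, smul_eq_mul, Complex.ofReal_sum, Complex.ofReal_mul, Finset.sum_mul]
        rw [← Finset.sum_add_distrib]
        refine Finset.sum_congr rfl fun g _ => ?_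
        rw [arcWeight_re hr4]
        linear_combination arcWeight N r g * hterm g
      rw [hsum, ← Finset.sum_mul, sum_arcWeight, arcChar, hone, if_pos (by simpa using hr1),
        ← Complex.exp_add]
      congr 1
      push_cast
      ring
    rw [Complex.exp_ofReal_mul_I] at hC
    have h1 := congrArg Complex.re hC
    have h2 := congrArg Complex.im hC
    simp [-Complex.ofReal_cos, -Complex.ofReal_sin, -Complex.ofReal_div,
      -Complex.ofReal_mul] at h1 h2
    exact Prod.ext h1 h2
  refine rotated_vertex_notMem N hN ?_
  rw [hlift, ← hZπ]
  exact ⟨Z, ⟨hZL, hZpsd⟩, rfl⟩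
end

section
/- Let N ≥ 3 and d ≥ 1 be integers, and suppose N = p^t for a prime p and an integer t ≥ 1. Suppose the regular N-gon admits an LP lift of size d that is equivariant with respect to the rotation group Rot_N ≅ ℤ/Nℤ; i.e., suppose there exist: an affine subspace L of ℝ^d; a linear map π : ℝ^d → ℝ²; and a map Φ : ℤ/Nℤ → Sym(d) into permutations of the d coordinates with Φ(g + g') = Φ(g)∘Φ(g') for all g, g'; such that: (1) conv(𝒳_N) = π({y ∈ L : y ≥ 0 componentwise}); (2) Φ(g)·y ∈ L for all g ∈ ℤ/Nℤ and all y ∈ L, where Φ(g)·y denotes permuting the coordinates of y by Φ(g); and (3) π(Φ(g)·y) = R_g · π(y) for all g ∈ ℤ/Nℤ and all componentwise-nonnegative y ∈ L, where R_g is the rotation of ℝ² by angle 2πg/N. Then d ≥ N. -/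
open Real Finset

/-!
Suppose `d < N = p ^ t`. The permutation `σ = Φ 1` satisfies `σ ^ N = 1`, so every cycle length of
`σ` divides `p ^ t`; being at most `d < p ^ t`, it divides `p ^ (t - 1)`. Hence the group element
`p ^ (t - 1)` acts trivially on the coordinates (`perm_pow_eq_one_of_lt`), and by equivariance the
rotation by `2 * π / p` fixes the whole polygon. A nontrivial rotation fixes only the origin, whereas
the polygon has vertices on the unit circle.
-/

/-- A permutation of fewer than `p ^ (k + 1)` points whose order divides `p ^ (k + 1)` already has
order dividing `p ^ k`. -/
lemma perm_pow_eq_one_of_lt {d p k : ℕ} (hp : p.Prime) (hd : d < p ^ (k + 1))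
    (σ : Equiv.Perm (Fin d)) (hσ : σ ^ p ^ (k + 1) = 1) : σ ^ p ^ k = 1 := by
  ext i
  have hper : Function.IsPeriodicPt σ (p ^ (k + 1)) i := by
    rw [Function.IsPeriodicPt, Function.IsFixedPt, ← Equiv.Perm.coe_pow, hσ]
    rfl
  have hle : Function.minimalPeriod σ i ≤ d := by
    simpa using Function.minimalPeriod_le_card (f := σ) (x := i)
  obtain ⟨m, hm, hmeq⟩ := (Nat.dvd_prime_pow hp).1 hper.minimalPeriod_dvd
  have hmk : m ≤ k := by
    by_contra hlt
    have : m = k + 1 := by omega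
    subst this
    omega
  have hfix : Function.IsPeriodicPt σ (p ^ k) i := by
    rw [Function.isPeriodicPt_iff_minimalPeriod_dvd, hmeq]
    exact pow_dvd_pow p hmk
  rw [Function.IsPeriodicPt, Function.IsFixedPt, ← Equiv.Perm.coe_pow] at hfix
  rw [hfix]
  rfl

/-- When `N` is a prime power, any LP lift of the regular `N`-gon that is equivariant
with respect to the rotation group `Rot_N ≅ ℤ/Nℤ` has size at least `N`. -/
theorem equivariant_lp_lift_lb (N d : ℕ) (hN : 3 ≤ N) (hd : 1 ≤ d)
    (p t : ℕ) (hp : p.Prime) (ht : 1 ≤ t) (hNpt : N = p ^ t)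
    (L : AffineSubspace ℝ (Fin d → ℝ))
    (π' : (Fin d → ℝ) →ₗ[ℝ] ℝ × ℝ)
    (Φ : ZMod N → Equiv.Perm (Fin d))
    (hΦ : ∀ g g' : ZMod N, Φ (g + g') = Φ g * Φ g')
    (hlift : convexHull ℝ
        {q : ℝ × ℝ | ∃ i ∈ Finset.Icc (1:ℕ) N,
          q = (Real.cos ((2 * (i : ℝ) - 1) * π / N),
               Real.sin ((2 * (i : ℝ) - 1) * π / N))} =
      π' '' {y | y ∈ L ∧ ∀ i, 0 ≤ y i})
    (hinv : ∀ g : ZMod N, ∀ y ∈ L, (fun i => y ((Φ g)⁻¹ i)) ∈ L)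
    (hequiv : ∀ g : ZMod N, ∀ y ∈ L, (∀ i, 0 ≤ y i) →
      π' (fun i => y ((Φ g)⁻¹ i)) =
        (Real.cos (2 * π * (g.val : ℝ) / N) * (π' y).1 -
            Real.sin (2 * π * (g.val : ℝ) / N) * (π' y).2,
         Real.sin (2 * π * (g.val : ℝ) / N) * (π' y).1 +
            Real.cos (2 * π * (g.val : ℝ) / N) * (π' y).2)) :
    N ≤ d := by
  by_contra! hlt
  obtain ⟨k, rfl⟩ : ∃ k, t = k + 1 := ⟨t - 1, by omega⟩
  have hΦ0 : Φ 0 = 1 := by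
    have h := hΦ 0 0
    rw [add_zero] at h
    exact left_eq_mul.1 h
  have hΦpow : ∀ n : ℕ, Φ (n : ZMod N) = Φ 1 ^ n := by
    intro n
    induction n with
    | zero => simpa using hΦ0
    | succ n ih => rw [Nat.cast_succ, hΦ, ih, pow_succ]
  have htriv : Φ ((p ^ k : ℕ) : ZMod N) = 1 := by
    rw [hΦpow]
    refine perm_pow_eq_one_of_lt hp (hNpt ▸ hlt) _ ?_
    rw [← hNpt, ← hΦpow, ZMod.natCast_self, hΦ0]
  have hkN : p ^ k < N := by
    rw [hNpt]
    exact Nat.pow_lt_pow_right hp.one_lt (Nat.lt_succ_self k)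
  have hval : ((p ^ k : ℕ) : ZMod N).val = p ^ k := ZMod.val_natCast_of_lt hkN
  have hNpos : (0 : ℝ) < N := by
    have : 0 < N := by omega
    exact_mod_cast this
  have hvert : (Real.cos (π / N), Real.sin (π / N)) ∈ π' '' {y | y ∈ L ∧ ∀ i, 0 ≤ y i} := by
    rw [← hlift]
    refine subset_convexHull ℝ _ ⟨1, Finset.mem_Icc.2 ⟨le_rfl, by omega⟩, ?_⟩
    norm_num
  obtain ⟨y, ⟨hyL, hy0⟩, hy⟩ := hvert
  have hfix := hequiv ((p ^ k : ℕ) : ZMod N) y hyL hy0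
  rw [htriv, hval] at hfix
  simp only [inv_one, Equiv.Perm.coe_one, id_eq, hy, Prod.mk.injEq] at hfix
  obtain ⟨h1, h2⟩ := hfix
  set x : ℝ := 2 * π * ((p ^ k : ℕ) : ℝ) / N with hx
  -- The inner product of the fixed-point equation with the vertex, a unit vector, is `cos x = 1`.
  have hcos : Real.cos x = 1 := by
    linear_combination -Real.cos (π / N) * h1 - Real.sin (π / N) * h2 -
      (Real.cos x - 1) * Real.sin_sq_add_cos_sq (π / N)
  have hpk : (0 : ℝ) < ((p ^ k : ℕ) : ℝ) := by
    exact_mod_cast pow_pos hp.pos k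
  have hxpos : 0 < x := by positivity
  have hxlt : x < 2 * π := by
    rw [hx, div_lt_iff₀ hNpos]
    have : ((p ^ k : ℕ) : ℝ) < N := by exact_mod_cast hkN
    gcongr
  have := (Real.cos_eq_one_iff_of_lt_of_lt (by linarith) hxlt).1 hcos
  linarith
end
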